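/- arXiv:2501.13112 — 3 statements merged into one kernel-verified Lean document; each statement's English description precedes it below -/
import Mathlib

section
/- For every matrix A ∈ Mat(2,ℂ) one has (1/2)·Σ_μ K^μ · A · K_μ = (1/2)·Σ_μ K̃^μ · A · K̃_μ = −Ã, where the sums run over μ ∈ {0,1,2,3}. -/
open Matrix BigOperators

noncomputable section

/-- The Pauli basis of `Mat(2,ℂ)`: `σ^0 = I`, `σ^1, σ^2, σ^3` the Pauli matrices. -/
def σm : Fin 4 → Matrix (Fin 2) (Fin 2) ℂ :=
  ![1, !![0, 1; 1, 0], !![0, -Complex.I; Complex.I, 0], !![1, 0; 0, -1]]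

/-- The Minkowski matrix `η = diag(1,-1,-1,-1)`. -/
def ηm : Fin 4 → Fin 4 → ℝ := fun a b => if a = b then (if a = 0 then 1 else -1) else 0

/-- Lowered-index Pauli matrices `σ_a := Σ_b η_{ab} σ^b`. -/
def σd (a : Fin 4) : Matrix (Fin 2) (Fin 2) ℂ := ∑ b, ηm a b • σm b

/-- The conjugate matrix `M̃ := (tr M)·I − M`. -/
def mtilde (M : Matrix (Fin 2) (Fin 2) ℂ) : Matrix (Fin 2) (Fin 2) ℂ :=
  M.trace • (1 : Matrix (Fin 2) (Fin 2) ℂ) - M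

/-- The contravariant metric `g^{μν} := Σ_{a,b} y^μ_a y^ν_b η^{ab}` built from a tetrad `y`. -/
def gUp (y : Matrix (Fin 4) (Fin 4) ℝ) : Matrix (Fin 4) (Fin 4) ℝ :=
  Matrix.of fun μ ν => ∑ a, ∑ b, y μ a * y ν b * ηm a b

/-- The covariant metric `g_{μν}`, the inverse matrix of `(g^{μν})`. -/
def gDown (y : Matrix (Fin 4) (Fin 4) ℝ) : Matrix (Fin 4) (Fin 4) ℝ := (gUp y)⁻¹

/-- `K^μ := Σ_a y^μ_a σ^a ∈ Mat(2,ℂ)`. -/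
def K (y : Matrix (Fin 4) (Fin 4) ℝ) (μ : Fin 4) : Matrix (Fin 2) (Fin 2) ℂ :=
  ∑ a, y μ a • σm a

/-- `K_μ := Σ_ν g_{μν} K^ν`. -/
def Kd (y : Matrix (Fin 4) (Fin 4) ℝ) (μ : Fin 4) : Matrix (Fin 2) (Fin 2) ℂ :=
  ∑ ν, gDown y μ ν • K y ν

theorem aux_eta (y : Matrix (Fin 4) (Fin 4) ℝ) (hy : IsUnit y.det) :
    yᵀ * gDown y * y = Matrix.of ηm := by
  have hg : gUp y = y * Matrix.of ηm * yᵀ := by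
    ext μ ν
    simp only [gUp, Matrix.of_apply, Matrix.mul_apply, Matrix.transpose_apply, Finset.sum_mul]
    rw [Finset.sum_comm]
    refine Finset.sum_congr rfl fun b _ => Finset.sum_congr rfl fun a _ => ?_
    ring
  have he : (Matrix.of ηm)⁻¹ = Matrix.of ηm := by
    apply Matrix.inv_eq_left_inv
    ext a b
    fin_cases a <;> fin_cases b <;> simp [Matrix.mul_apply, Fin.sum_univ_four, ηm]
  have hyT : IsUnit yᵀ.det := by rwa [Matrix.det_transpose]
  rw [gDown, hg, Matrix.mul_inv_rev, Matrix.mul_inv_rev, he]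
  rw [← Matrix.mul_assoc, Matrix.mul_nonsing_inv _ hyT, Matrix.one_mul, Matrix.mul_assoc,
    Matrix.nonsing_inv_mul _ hy, Matrix.mul_one]

theorem aux_rev {M : Type*} [AddCommMonoid M] (f : Fin 4 → Fin 4 → Fin 4 → Fin 4 → M) :
    ∑ m, ∑ n, ∑ b, ∑ a, f m n b a = ∑ a, ∑ b, ∑ n, ∑ m, f m n b a := by
  have h3 : ∀ g : Fin 4 → Fin 4 → Fin 4 → M,
      ∑ n, ∑ b, ∑ a, g n b a = ∑ a, ∑ b, ∑ n, g n b a := by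
    intro g
    rw [Finset.sum_comm]
    rw [Finset.sum_congr rfl fun b _ => Finset.sum_comm]
    rw [Finset.sum_comm]
  rw [Finset.sum_congr rfl fun m _ => h3 (f m), Finset.sum_comm]
  refine Finset.sum_congr rfl fun a _ => ?_
  rw [Finset.sum_comm]
  exact Finset.sum_congr rfl fun b _ => Finset.sum_comm

theorem aux_sum (y : Matrix (Fin 4) (Fin 4) ℝ) (hy : IsUnit y.det)
    (A : Matrix (Fin 2) (Fin 2) ℂ) (s : Fin 4 → Matrix (Fin 2) (Fin 2) ℂ) :
    ∑ μ, (∑ a, y μ a • s a) * A * (∑ ν, gDown y μ ν • ∑ b, y ν b • s b)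
      = ∑ a, ∑ b, ηm a b • (s a * A * s b) := by
  have h : ∀ a b, ηm a b = ∑ ν, ∑ μ, y μ a * gDown y μ ν * y ν b := by
    intro a b
    have := congrFun (congrFun (aux_eta y hy) a) b
    simp only [Matrix.mul_apply, Matrix.transpose_apply, Finset.sum_mul, Matrix.of_apply] at this
    exact this.symm
  simp only [h, Finset.sum_mul, Finset.mul_sum, Finset.smul_sum, Finset.sum_smul,
    Matrix.smul_mul, Matrix.mul_smul, smul_smul]
  rw [aux_rev]
  refine Finset.sum_congr rfl fun a _ => Finset.sum_congr rfl fun b _ =>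
    Finset.sum_congr rfl fun ν _ => Finset.sum_congr rfl fun μ _ => ?_
  congr 1
  ring

theorem aux_tilde (c : Fin 4 → ℝ) (s : Fin 4 → Matrix (Fin 2) (Fin 2) ℂ) :
    mtilde (∑ a, c a • s a) = ∑ a, c a • mtilde (s a) := by
  simp only [mtilde, Matrix.trace_sum, Matrix.trace_smul, smul_sub, Finset.sum_sub_distrib,
    Finset.sum_smul, smul_assoc]

/-- `(1/2)·Σ_μ K^μ A K_μ = (1/2)·Σ_μ K̃^μ A K̃_μ = −Ã` for every `A ∈ Mat(2,ℂ)`. -/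
theorem K_sandwich_neg_tilde (y : Matrix (Fin 4) (Fin 4) ℝ) (hy : IsUnit y.det)
    (A : Matrix (Fin 2) (Fin 2) ℂ) :
    (1 / 2 : ℂ) • ∑ μ, K y μ * A * Kd y μ = -mtilde A ∧
    (1 / 2 : ℂ) • ∑ μ, mtilde (K y μ) * A * mtilde (Kd y μ) = -mtilde A := by
  constructor
  · simp only [Kd, K]
    rw [aux_sum y hy A σm]
    ext i j
    fin_cases i <;> fin_cases j <;>
      simp [Fin.sum_univ_four, ηm, σm, mtilde, Matrix.mul_apply, Matrix.trace, Fin.sum_univ_two,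
        Matrix.vecMul, dotProduct] <;> ring_nf <;> simp <;> ring
  · simp only [Kd, K, aux_tilde]
    rw [aux_sum y hy A (fun a => mtilde (σm a))]
    ext i j
    fin_cases i <;> fin_cases j <;>
      simp [Fin.sum_univ_four, ηm, σm, mtilde, Matrix.mul_apply, Matrix.trace, Fin.sum_univ_two,
        Matrix.vecMul, dotProduct] <;> ring_nf <;> simp <;> ring
end
end

section
/- (Flat-space form of Theorem 3.) Suppose Ψ, K^μ, A_μ, C_μ : ℝ⁴ → Mat(2,ℂ) (μ ∈ {0,1,2,3}) are differentiable, each K^μ(x) is hermitian, Σ_μ ∂_μ(tr K^μ) = 0 at every point, each A_μ(x) is anti-hermitian, and each C_μ(x) is anti-hermitian with tr C_μ(x) = 0. If the Dirac–Lanczos equation Σ_μ i·K^μ·(∂_μΨ − C_μ·Ψ + Ψ·A_μ) = 0 holds at every point of ℝ⁴, then at every point Σ_μ ( ∂_μ(Ψ†·i·K^μ·Ψ) − [A_μ, Ψ†·i·K^μ·Ψ] ) − Ψ†·( Σ_μ ( ∂_μ(π₋(i·K^μ)) − [C_μ, π₋(i·K^μ)] ) )·Ψ = 0. -/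
open Matrix BigOperators

noncomputable section

attribute [local instance] Matrix.normedAddCommGroup Matrix.normedSpace

/-- The partial derivative `∂_μ f` at `x` of a map `f : ℝ⁴ → E`. -/
def pd {E : Type*} [NormedAddCommGroup E] [NormedSpace ℝ E]
    (f : (Fin 4 → ℝ) → E) (μ : Fin 4) (x : Fin 4 → ℝ) : E :=
  fderiv ℝ f x (Pi.single μ 1)

/-- `π₊(M) := ((1/2)·tr M)·I`. -/
def πplus (M : Matrix (Fin 2) (Fin 2) ℂ) : Matrix (Fin 2) (Fin 2) ℂ :=
  ((1 / 2 : ℂ) * M.trace) • (1 : Matrix (Fin 2) (Fin 2) ℂ)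

/-- `π₋(M) := M − π₊(M)`, the traceless part of `M`. -/
def πminus (M : Matrix (Fin 2) (Fin 2) ℂ) : Matrix (Fin 2) (Fin 2) ℂ :=
  M - πplus M

abbrev M2 := Matrix (Fin 2) (Fin 2) ℂ

theorem pd_lin {E F : Type*} [NormedAddCommGroup E] [NormedSpace ℝ E] [FiniteDimensional ℝ E]
    [NormedAddCommGroup F] [NormedSpace ℝ F] (L : E →ₗ[ℝ] F)
    (f : (Fin 4 → ℝ) → E) (μ : Fin 4) (x : Fin 4 → ℝ) (hf : Differentiable ℝ f) :
    DifferentiableAt ℝ (fun z => L (f z)) x ∧ pd (fun z => L (f z)) μ x = L (pd f μ x) := by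
  have h := (LinearMap.toContinuousLinearMap L).hasFDerivAt.comp x (hf x).hasFDerivAt
  have h2 : HasFDerivAt (fun z => L (f z)) _ x := h
  refine ⟨h2.differentiableAt, ?_⟩
  unfold pd
  rw [h2.fderiv]
  rfl

def entryL (i j : Fin 2) : M2 →ₗ[ℝ] ℂ where
  toFun M := M i j
  map_add' _ _ := rfl
  map_smul' _ _ := rfl

def ctL : M2 →ₗ[ℝ] M2 where
  toFun M := Mᴴ
  map_add' _ _ := by simp
  map_smul' _ _ := by simp

def smL : M2 →ₗ[ℝ] M2 where
  toFun M := Complex.I • M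
  map_add' _ _ := by simp
  map_smul' c M := by rw [smul_comm]; rfl

def trL : M2 →ₗ[ℝ] ℂ where
  toFun M := M.trace
  map_add' _ _ := by simp
  map_smul' _ _ := by simp [Matrix.trace_smul]

def pmL : M2 →ₗ[ℝ] M2 where
  toFun M := πminus (Complex.I • M)
  map_add' M N := by
    ext i j; simp [πminus, πplus]; ring
  map_smul' c M := by
    ext i j; simp [πminus, πplus, Matrix.trace, Fin.sum_univ_two]; ring

theorem pd_entry (f : (Fin 4 → ℝ) → M2) (μ : Fin 4) (x : Fin 4 → ℝ)
    (hf : Differentiable ℝ f) (i j : Fin 2) :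
    DifferentiableAt ℝ (fun z => f z i j) x ∧ pd f μ x i j = pd (fun z => f z i j) μ x := by
  have := pd_lin (entryL i j) f μ x hf
  exact ⟨this.1, this.2.symm⟩

theorem diff_mul (f g : (Fin 4 → ℝ) → M2)
    (hf : Differentiable ℝ f) (hg : Differentiable ℝ g) :
    Differentiable ℝ (fun z => f z * g z) := by
  intro x
  refine differentiableAt_pi.2 fun i => differentiableAt_pi.2 fun j => ?_
  simp only [Matrix.mul_apply, Fin.sum_univ_two]
  exact (((pd_entry f 0 x hf i 0).1.fun_mul (pd_entry g 0 x hg 0 j).1).fun_add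
    ((pd_entry f 0 x hf i 1).1.fun_mul (pd_entry g 0 x hg 1 j).1))

theorem pd_mul (f g : (Fin 4 → ℝ) → M2) (μ : Fin 4) (x : Fin 4 → ℝ)
    (hf : Differentiable ℝ f) (hg : Differentiable ℝ g) :
    pd (fun z => f z * g z) μ x = pd f μ x * g x + f x * pd g μ x := by
  ext i j
  rw [(pd_entry _ μ x (diff_mul f g hf hg) i j).2]
  simp only [Matrix.add_apply, Matrix.mul_apply, Fin.sum_univ_two,
    (pd_entry f μ x hf _ _).2, (pd_entry g μ x hg _ _).2]
  have a := fun i j => (pd_entry f μ x hf i j).1.hasFDerivAt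
  have b := fun i j => (pd_entry g μ x hg i j).1.hasFDerivAt
  have h := ((a i 0).fun_mul (b 0 j)).fun_add ((a i 1).fun_mul (b 1 j))
  unfold pd
  rw [h.fderiv]
  simp
  ring

/-- Flat-space form of Theorem 3: solutions of the Dirac–Lanczos equation satisfy
the current identity. -/
theorem dirac_lanczos_current_identity
    (Ψ : (Fin 4 → ℝ) → Matrix (Fin 2) (Fin 2) ℂ)
    (K A C : Fin 4 → (Fin 4 → ℝ) → Matrix (Fin 2) (Fin 2) ℂ)
    (hΨ : Differentiable ℝ Ψ)
    (hK : ∀ μ, Differentiable ℝ (K μ))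
    (hA : ∀ μ, Differentiable ℝ (A μ))
    (hC : ∀ μ, Differentiable ℝ (C μ))
    (hKh : ∀ μ x, (K μ x)ᴴ = K μ x)
    (hdiv : ∀ x, (∑ μ, pd (fun z => (K μ z).trace) μ x) = 0)
    (hAah : ∀ μ x, (A μ x)ᴴ = -A μ x)
    (hCah : ∀ μ x, (C μ x)ᴴ = -C μ x)
    (hCtr : ∀ μ x, (C μ x).trace = 0)
    (heq : ∀ x, (∑ μ, Complex.I • (K μ x * (pd Ψ μ x - C μ x * Ψ x + Ψ x * A μ x))) = 0) :
    ∀ x, (∑ μ, (pd (fun z => (Ψ z)ᴴ * (Complex.I • K μ z) * Ψ z) μ x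
            - (A μ x * ((Ψ x)ᴴ * (Complex.I • K μ x) * Ψ x)
               - ((Ψ x)ᴴ * (Complex.I • K μ x) * Ψ x) * A μ x)))
        - (Ψ x)ᴴ * (∑ μ, (pd (fun z => πminus (Complex.I • K μ z)) μ x
            - (C μ x * πminus (Complex.I • K μ x)
               - πminus (Complex.I • K μ x) * C μ x))) * Ψ x = 0 := by
  intro x
  have hKI : ∀ μ, Differentiable ℝ (fun z => Complex.I • K μ z) :=
    fun μ y => (pd_lin smL (K μ) μ y (hK μ)).1
  have hΨc : Differentiable ℝ (fun z => (Ψ z)ᴴ) := fun y => (pd_lin ctL Ψ 0 y hΨ).1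
  have e1 : ∀ μ, pd (fun z => (Ψ z)ᴴ * (Complex.I • K μ z) * Ψ z) μ x
      = ((pd Ψ μ x)ᴴ * (Complex.I • K μ x) + (Ψ x)ᴴ * (Complex.I • pd (K μ) μ x)) * Ψ x
        + (Ψ x)ᴴ * (Complex.I • K μ x) * pd Ψ μ x := by
    intro μ
    have a1 : pd (fun z => (Ψ z)ᴴ) μ x = (pd Ψ μ x)ᴴ := (pd_lin ctL Ψ μ x hΨ).2
    have a2 : pd (fun z => Complex.I • K μ z) μ x = Complex.I • pd (K μ) μ x :=
      (pd_lin smL (K μ) μ x (hK μ)).2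
    rw [pd_mul (fun z => (Ψ z)ᴴ * (Complex.I • K μ z)) Ψ μ x (diff_mul _ _ hΨc (hKI μ)) hΨ,
      pd_mul (fun z => (Ψ z)ᴴ) (fun z => Complex.I • K μ z) μ x hΨc (hKI μ), a1, a2]
  have e2 : ∀ μ, pd (fun z => πminus (Complex.I • K μ z)) μ x
      = Complex.I • pd (K μ) μ x
        - (Complex.I / 2 * pd (fun z => (K μ z).trace) μ x) • (1 : M2) := by
    intro μ
    have a1 : pd (fun z => πminus (Complex.I • K μ z)) μ x = πminus (Complex.I • pd (K μ) μ x) :=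
      (pd_lin pmL (K μ) μ x (hK μ)).2
    have a2 : pd (fun z => (K μ z).trace) μ x = (pd (K μ) μ x).trace :=
      (pd_lin trL (K μ) μ x (hK μ)).2
    rw [a1, a2, πminus, πplus, Matrix.trace_smul, smul_eq_mul]
    congr 2
    ring
  have e3 : ∀ μ, C μ x * πminus (Complex.I • K μ x) - πminus (Complex.I • K μ x) * C μ x
      = C μ x * (Complex.I • K μ x) - (Complex.I • K μ x) * C μ x := by
    intro μ
    simp [πminus, πplus, mul_sub, sub_mul]
  have h0 := heq x
  have h1 := congrArg conjTranspose h0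
  have h2 : ∑ μ, ((pd Ψ μ x)ᴴ + (Ψ x)ᴴ * C μ x - A μ x * (Ψ x)ᴴ) * (Complex.I • K μ x) = 0 := by
    rw [Matrix.conjTranspose_sum, Matrix.conjTranspose_zero] at h1
    rw [← neg_eq_zero, ← h1, ← Finset.sum_neg_distrib]
    refine Finset.sum_congr rfl fun μ _ => ?_
    simp [hKh, hAah, hCah, sub_eq_add_neg]
  have h3 : (∑ μ, (Complex.I / 2 * pd (fun z => (K μ z).trace) μ x) • (1 : M2)) = 0 := by
    rw [← Finset.sum_smul, ← Finset.mul_sum, hdiv x]; simp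
  have k1 := congrArg (fun M => M * Ψ x) h2
  have k2 := congrArg (fun M => (Ψ x)ᴴ * M) h0
  have k3 := congrArg (fun M => (Ψ x)ᴴ * M * Ψ x) h3
  simp only [Finset.sum_mul, Finset.mul_sum, zero_mul, mul_zero] at k1 k2 k3
  simp only [e1, e2, e3]
  rw [Finset.mul_sum, Finset.sum_mul, ← Finset.sum_sub_distrib]
  have k4 := congrArg₂ (· + ·) (congrArg₂ (· + ·) k1 k2) k3
  simp only [← Finset.sum_add_distrib, add_zero] at k4
  rw [← k4]
  refine Finset.sum_congr rfl fun μ _ => ?_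
  rw [← smul_mul_assoc]
  generalize Complex.I • K μ x = k
  generalize (Complex.I / 2 * pd (fun z => (K μ z).trace) μ x) • (1 : M2) = t
  noncomm_ring
end
end

section
/- (Theorem 4, gauge symmetry II, flat-space form.) Suppose Ψ, K^μ, A_μ, C_μ : ℝ⁴ → Mat(2,ℂ) (μ ∈ {0,1,2,3}) are differentiable, each K^μ(x) is hermitian, each A_μ(x) is anti-hermitian, each C_μ(x) is anti-hermitian with tr C_μ(x) = 0, and the Dirac–Lanczos equation Σ_μ i·K^μ·(∂_μΨ − C_μ·Ψ + Ψ·A_μ) = 0 holds at every point. Let S : ℝ⁴ → Mat(2,ℂ) be differentiable with S(x)†·S(x) = I and det S(x) = 1 for all x. Define Ψ́ := S⁻¹·Ψ·S, Ḱ^μ := S⁻¹·K^μ·S, Ć_μ := S⁻¹·C_μ·S − S⁻¹·∂_μS, and Á_μ := S⁻¹·A_μ·S − S⁻¹·∂_μS. Then Σ_μ i·Ḱ^μ·(∂_μΨ́ − Ć_μ·Ψ́ + Ψ́·Á_μ) = 0 at every point. -/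
open Matrix BigOperators

noncomputable section

attribute [local instance] Matrix.normedAddCommGroup Matrix.normedSpace

/-- product rule -/
theorem pd_mul_aux (f g : (Fin 4 → ℝ) → Matrix (Fin 2) (Fin 2) ℂ)
    (hf : Differentiable ℝ f) (hg : Differentiable ℝ g) :
    Differentiable ℝ (fun z => f z * g z) ∧
    ∀ μ x, pd (fun z => f z * g z) μ x = pd f μ x * g x + f x * pd g μ x := by
  let B := LinearMap.toContinuousBilinearMap (LinearMap.mul ℝ (Matrix (Fin 2) (Fin 2) ℂ))
  have key : ∀ x, HasFDerivAt (fun z => f z * g z) _ x := fun x =>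
    B.hasFDerivAt_of_bilinear (hf x).hasFDerivAt (hg x).hasFDerivAt
  refine ⟨fun x => (key x).differentiableAt, fun μ x => ?_⟩
  unfold pd
  refine (DFunLike.congr_fun (key x).fderiv (Pi.single μ 1)).trans ?_
  exact add_comm _ _

theorem inv_diff_aux (S : (Fin 4 → ℝ) → Matrix (Fin 2) (Fin 2) ℂ)
    (hS : Differentiable ℝ S) (hSu : ∀ x, (S x)ᴴ * S x = 1) :
    Differentiable ℝ (fun z => (S z)⁻¹) := by
  have h : (fun z => (S z)⁻¹) = fun z => (S z)ᴴ := by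
    funext z
    exact Matrix.inv_eq_left_inv (hSu z)
  rw [h]
  let L := LinearMap.toContinuousLinearMap
    (Matrix.conjTransposeLinearEquiv (Fin 2) (Fin 2) ℝ ℂ).toLinearMap
  exact L.differentiable.comp hS

/-- Theorem 4, gauge symmetry II (flat-space form): the Dirac–Lanczos equation is
invariant under `Ψ → S⁻¹ΨS`, `K^μ → S⁻¹K^μS`, `C_μ → S⁻¹C_μS − S⁻¹∂_μS`,
`A_μ → S⁻¹A_μS − S⁻¹∂_μS` with `S : ℝ⁴ → SU(2)`. -/
theorem dirac_lanczos_gauge_symmetry_II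
    (Ψ : (Fin 4 → ℝ) → Matrix (Fin 2) (Fin 2) ℂ)
    (K A C : Fin 4 → (Fin 4 → ℝ) → Matrix (Fin 2) (Fin 2) ℂ)
    (hΨ : Differentiable ℝ Ψ)
    (hK : ∀ μ, Differentiable ℝ (K μ))
    (hA : ∀ μ, Differentiable ℝ (A μ))
    (hC : ∀ μ, Differentiable ℝ (C μ))
    (hKh : ∀ μ x, (K μ x)ᴴ = K μ x)
    (hAah : ∀ μ x, (A μ x)ᴴ = -A μ x)
    (hCah : ∀ μ x, (C μ x)ᴴ = -C μ x)
    (hCtr : ∀ μ x, (C μ x).trace = 0)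
    (heq : ∀ x, (∑ μ, Complex.I • (K μ x * (pd Ψ μ x - C μ x * Ψ x + Ψ x * A μ x))) = 0)
    (S : (Fin 4 → ℝ) → Matrix (Fin 2) (Fin 2) ℂ)
    (hS : Differentiable ℝ S)
    (hSu : ∀ x, (S x)ᴴ * S x = 1)
    (hSdet : ∀ x, (S x).det = 1) :
    ∀ x, (∑ μ, Complex.I • ((S x)⁻¹ * K μ x * S x *
        (pd (fun z => (S z)⁻¹ * Ψ z * S z) μ x
          - ((S x)⁻¹ * C μ x * S x - (S x)⁻¹ * pd S μ x) * ((S x)⁻¹ * Ψ x * S x)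
          + ((S x)⁻¹ * Ψ x * S x) * ((S x)⁻¹ * A μ x * S x - (S x)⁻¹ * pd S μ x)))) = 0 := by
  intro x
  have hI := inv_diff_aux S hS hSu
  have hl : ∀ z, (S z)⁻¹ * S z = 1 := fun z => by
    rw [Matrix.inv_eq_left_inv (hSu z)]; exact hSu z
  have hr : S x * (S x)⁻¹ = 1 := mul_eq_one_comm.mp (hl x)
  have h1 := pd_mul_aux _ _ hI hΨ
  have h2 := pd_mul_aux _ _ h1.1 hS
  have hd : ∀ μ, pd (fun z => (S z)⁻¹) μ x = - ((S x)⁻¹ * pd S μ x * (S x)⁻¹) := by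
    intro μ
    have h3 := (pd_mul_aux _ _ hI hS).2 μ x
    have h4 : pd (fun z => (S z)⁻¹ * S z) μ x = 0 := by
      simp [hl, pd]
    rw [h4] at h3
    have h5 := congrArg (fun M => M * (S x)⁻¹) h3
    simp only [zero_mul, add_mul] at h5
    rw [mul_assoc (pd _ μ x), hr, mul_one] at h5
    exact eq_neg_of_add_eq_zero_left h5.symm
  have h6 := congrArg (fun M => (S x)⁻¹ * M * S x) (heq x)
  simp only [Matrix.mul_sum, Matrix.sum_mul, mul_zero, zero_mul] at h6
  rw [← h6]
  refine Finset.sum_congr rfl fun μ _ => ?_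
  rw [h2.2, h1.2, hd, Matrix.mul_smul, Matrix.smul_mul]
  congr 1
  have hc : ∀ M, S x * ((S x)⁻¹ * M) = M := fun M => by rw [← mul_assoc, hr, one_mul]
  simp only [mul_add, add_mul, mul_sub, sub_mul, mul_neg, neg_mul, mul_assoc, hc]
  abel
end
end
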